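/- arXiv:1411.6354 — 2 statements merged into one kernel-verified Lean document; each statement's English description precedes it below -/
import Mathlib

section
/- Let w be a bounded weight structure on a triangulated category C, let w' be a weight structure on a triangulated category C', and let F : C → C' be an exact (triangulated) functor. Then F is weight-exact (i.e., F(C_{w≤0}) ⊆ C'_{w'≤0} and F(C_{w≥0}) ⊆ C'_{w'≥0}) if and only if F(C_{w=0}) ⊆ C'_{w'=0}. -/
/-!
Both classes of a weight structure are determined by orthogonality: `C_{w≤0}` consists of the
objects without nonzero morphisms to `C_{w≥0}[1]`, and dually, because a weight decomposition in
which one map vanishes splits.  Hence both classes are closed under extensions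
(`LE_of_distTriang`, `GE_of_distTriang`).

If `X ∈ C_{w≤0}` and `X[n+1] ∈ C_{w≥0}`, a decomposition `A → X → B → A[1]` with `A[1] ∈ C_{w≤0}`
and `B ∈ C_{w≥0}` has `B` in the heart, since `B` is an extension of `A[1]` by `X`; and
`A[1]` satisfies the same hypotheses with `n` in place of `n+1`.  As `F(X)` is an extension of
`F(B)` by `F(A) ≅ F(A[1])[-1]`, induction on `n` shows `F(X) ∈ C'_{w'≤0}`; boundedness provides
the initial `n`.  The argument for `C_{w≥0}` is dual.
-/

open CategoryTheory CategoryTheory.Limits CategoryTheory.Pretriangulated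

namespace CWH

/-- `X` is a retract of `Y`. -/
def IsRetract {C : Type*} [Category C] (X Y : C) : Prop :=
  ∃ (i : X ⟶ Y) (r : Y ⟶ X), i ≫ r = 𝟙 X

/-- The Karoubi-closure of a class of objects: all retracts of its objects. -/
def retractClosure {C : Type*} [Category C] (S : Set C) : Set C :=
  {X : C | ∃ Y ∈ S, IsRetract X Y}

variable (C : Type*) [Category C] [HasZeroObject C] [HasShift C ℤ]
  [Preadditive C] [∀ n : ℤ, (shiftFunctor C n).Additive] [Pretriangulated C]

/-- A weight structure on a (pre)triangulated category (homological convention):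
a pair of retract-closed classes `LE = C_{w≤0}` and `GE = C_{w≥0}` such that
`C_{w≤0} ⊆ C_{w≤0}[1]`, `C_{w≥0}[1] ⊆ C_{w≥0}`, `Hom(C_{w≤0}, C_{w≥0}[1]) = 0`,
and every object admits a weight decomposition. -/
structure WeightStructure where
  LE : Set C
  GE : Set C
  retract_LE : ∀ ⦃X Y : C⦄, IsRetract X Y → Y ∈ LE → X ∈ LE
  retract_GE : ∀ ⦃X Y : C⦄, IsRetract X Y → Y ∈ GE → X ∈ GE
  shift_LE : ∀ ⦃X : C⦄, X ∈ LE → X⟦(-1 : ℤ)⟧ ∈ LE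
  shift_GE : ∀ ⦃X : C⦄, X ∈ GE → X⟦(1 : ℤ)⟧ ∈ GE
  orthogonal : ∀ ⦃X Y : C⦄, X ∈ LE → Y ∈ GE → ∀ f : X ⟶ Y⟦(1 : ℤ)⟧, f = 0
  decomp : ∀ M : C, ∃ (X Y : C) (f : X ⟶ M) (g : M ⟶ Y) (h : Y ⟶ X⟦(1 : ℤ)⟧),
    Triangle.mk f g h ∈ (distTriang C) ∧ X ∈ LE ∧ Y⟦(-1 : ℤ)⟧ ∈ GE

variable {C}

namespace WeightStructure

variable (w : WeightStructure C)

/-- `C_{w≤i} = C_{w≤0}[i]`. -/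
def le (i : ℤ) : Set C := {X : C | X⟦(-i)⟧ ∈ w.LE}

/-- `C_{w≥i} = C_{w≥0}[i]`. -/
def ge (i : ℤ) : Set C := {X : C | X⟦(-i)⟧ ∈ w.GE}

/-- `C_{w=i} = C_{w≤i} ∩ C_{w≥i}`. -/
def eqw (i : ℤ) : Set C := w.le i ∩ w.ge i

/-- `w` is bounded if every object lies in some `C_{w≤i}` and in some `C_{w≥i}`. -/
def IsBounded : Prop := ∀ X : C, (∃ i : ℤ, X ∈ w.le i) ∧ (∃ i : ℤ, X ∈ w.ge i)

end WeightStructure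

/-- The extension-closure of a class `S` of objects: the smallest class containing
the zero objects and `S` and closed under extensions (distinguished triangles). -/
inductive ExtClosure (S : Set C) : C → Prop
  | zero (X : C) : IsZero X → ExtClosure S X
  | of (X : C) : X ∈ S → ExtClosure S X
  | ext {A E B : C} (f : A ⟶ E) (g : E ⟶ B) (h : B ⟶ A⟦(1 : ℤ)⟧) :
      Triangle.mk f g h ∈ (distTriang C) → ExtClosure S A → ExtClosure S B → ExtClosure S E

/-- The smallest full Karoubi-closed (strict) triangulated subcategory containing `S`:
closure under zero objects, shifts, cones and retracts. -/
inductive TriangClosure (S : Set C) : C → Prop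
  | of (X : C) : X ∈ S → TriangClosure S X
  | zero (X : C) : IsZero X → TriangClosure S X
  | shift (X : C) (n : ℤ) : TriangClosure S X → TriangClosure S (X⟦n⟧)
  | ext {X Y Z : C} (f : X ⟶ Y) (g : Y ⟶ Z) (h : Z ⟶ X⟦(1 : ℤ)⟧) :
      Triangle.mk f g h ∈ (distTriang C) → TriangClosure S X → TriangClosure S Y →
      TriangClosure S Z
  | retract (X Y : C) : IsRetract X Y → TriangClosure S Y → TriangClosure S X

/-- A (strict) full triangulated subcategory, given by its class of objects:
it contains the zero objects and is closed under shifts and under the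
two-out-of-three property for distinguished triangles. -/
structure IsTriangulatedSub (P : Set C) : Prop where
  zero : ∀ X : C, IsZero X → X ∈ P
  shift : ∀ X ∈ P, ∀ n : ℤ, X⟦n⟧ ∈ P
  ext₂ : ∀ ⦃X Y Z : C⦄ (f : X ⟶ Y) (g : Y ⟶ Z) (h : Z ⟶ X⟦(1 : ℤ)⟧),
    Triangle.mk f g h ∈ (distTriang C) → X ∈ P → Z ∈ P → Y ∈ P
  ext₃ : ∀ ⦃X Y Z : C⦄ (f : X ⟶ Y) (g : Y ⟶ Z) (h : Z ⟶ X⟦(1 : ℤ)⟧),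
    Triangle.mk f g h ∈ (distTriang C) → X ∈ P → Y ∈ P → Z ∈ P
  ext₁ : ∀ ⦃X Y Z : C⦄ (f : X ⟶ Y) (g : Y ⟶ Z) (h : Z ⟶ X⟦(1 : ℤ)⟧),
    Triangle.mk f g h ∈ (distTriang C) → Y ∈ P → Z ∈ P → X ∈ P

/-- A weight structure on the full (triangulated) subcategory of `C` whose objects
are given by the class `P`; retracts are taken inside `P` and the distinguished
triangles of the subcategory are the distinguished triangles of `C` with vertices
in `P`. -/
structure IsWeightStructureOn (P LEs GEs : Set C) : Prop where
  le_sub : LEs ⊆ P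
  ge_sub : GEs ⊆ P
  retract_le : ∀ ⦃X Y : C⦄, X ∈ P → IsRetract X Y → Y ∈ LEs → X ∈ LEs
  retract_ge : ∀ ⦃X Y : C⦄, X ∈ P → IsRetract X Y → Y ∈ GEs → X ∈ GEs
  shift_le : ∀ ⦃X : C⦄, X ∈ LEs → X⟦(-1 : ℤ)⟧ ∈ LEs
  shift_ge : ∀ ⦃X : C⦄, X ∈ GEs → X⟦(1 : ℤ)⟧ ∈ GEs
  orthogonal : ∀ ⦃X Y : C⦄, X ∈ LEs → Y ∈ GEs → ∀ f : X ⟶ Y⟦(1 : ℤ)⟧, f = 0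
  decomp : ∀ M ∈ P, ∃ (X Y : C) (f : X ⟶ M) (g : M ⟶ Y) (h : Y ⟶ X⟦(1 : ℤ)⟧),
    Triangle.mk f g h ∈ (distTriang C) ∧ X ∈ LEs ∧ Y⟦(-1 : ℤ)⟧ ∈ GEs

/-- The class of morphisms of `C` whose cone lies in `P`; the Verdier quotient
`C/P` is the localization of `C` at this class. -/
def coneIn (P : Set C) : MorphismProperty C := fun X Y f =>
  ∃ (Z : C) (g : Y ⟶ Z) (h : Z ⟶ X⟦(1 : ℤ)⟧),
    Triangle.mk f g h ∈ (distTriang C) ∧ Z ∈ P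

/-- A weight Postnikov tower for `M`: choices of weight truncations `trunc l = w_{≤l}M`
(with cones `conePt l = w_{≥l+1}M`), of the connecting morphisms between them that are
compatible with `𝟙 M`, and of the distinguished triangles
`w_{≤l}M → w_{≤l+1}M → M^{-l-1}[l+1] → (w_{≤l}M)[1]`; the objects `termAt l = M^{-l}`
lie in the heart and are the terms of the associated weight complex `t(M)`, whose
boundary morphisms `bd (l+1) l : M^{-l-1} → M^{-l}` are obtained by composing the
connecting morphisms of two consecutive triangles. -/
structure WeightPostnikovTower (w : WeightStructure C) (M : C) where
  trunc : ℤ → C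
  trunc_mem : ∀ l : ℤ, trunc l ∈ w.le l
  ι : ∀ l : ℤ, trunc l ⟶ M
  conePt : ℤ → C
  cone_mem : ∀ l : ℤ, conePt l ∈ w.ge (l + 1)
  coneπ : ∀ l : ℤ, M ⟶ conePt l
  coneδ : ∀ l : ℤ, conePt l ⟶ (trunc l)⟦(1 : ℤ)⟧
  trunc_dist : ∀ l : ℤ, Triangle.mk (ι l) (coneπ l) (coneδ l) ∈ (distTriang C)
  step : ∀ l : ℤ, trunc l ⟶ trunc (l + 1)
  step_ι : ∀ l : ℤ, step l ≫ ι (l + 1) = ι l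
  termAt : ℤ → C
  term_mem : ∀ l : ℤ, termAt l ∈ w.LE ∧ termAt l ∈ w.GE
  sπ : ∀ l : ℤ, trunc l ⟶ (termAt l)⟦l⟧
  sδ : ∀ l : ℤ, (termAt (l + 1))⟦(l + 1 : ℤ)⟧ ⟶ (trunc l)⟦(1 : ℤ)⟧
  step_dist : ∀ l : ℤ, Triangle.mk (step l) (sπ (l + 1)) (sδ l) ∈ (distTriang C)
  bd : ∀ i j : ℤ, termAt i ⟶ termAt j
  bd_shape : ∀ i j : ℤ, j + 1 ≠ i → bd i j = 0
  bd_eq : ∀ l : ℤ,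
    (shiftFunctor C (l + 1)).map (bd (l + 1) l) ≫
      (shiftFunctorAdd' C l 1 (l + 1) rfl).hom.app (termAt l) =
    sδ l ≫ (shiftFunctor C (1 : ℤ)).map (sπ l)

/-- The differential of the weight complex associated to a weight Postnikov tower,
in "homological" indexing: the `l`-th term `termAt l` is the `(-l)`-th term `M^{-l}`
of the weight complex. -/
def towerD {w : WeightStructure C} {M : C} (T : WeightPostnikovTower w M) :
    ∀ l : ℤ, T.termAt (l + 1) ⟶ T.termAt l :=
  fun l => T.bd (l + 1) l

section Complexes

variable {X Y : ℤ → C}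

/-- A morphism of ("homologically indexed") complexes. -/
def IsChainMapDown (X Y : ℤ → C) (dX : ∀ l : ℤ, X (l + 1) ⟶ X l)
    (dY : ∀ l : ℤ, Y (l + 1) ⟶ Y l) (f : ∀ l : ℤ, X l ⟶ Y l) : Prop :=
  ∀ l : ℤ, f (l + 1) ≫ dY l = dX l ≫ f l

/-- Two families of morphisms of complexes are chain homotopic. -/
def ChainHomotopicDown (X Y : ℤ → C) (dX : ∀ l : ℤ, X (l + 1) ⟶ X l)
    (dY : ∀ l : ℤ, Y (l + 1) ⟶ Y l) (f g : ∀ l : ℤ, X l ⟶ Y l) : Prop :=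
  ∃ s : ∀ l : ℤ, X l ⟶ Y (l + 1),
    ∀ l : ℤ, f (l + 1) - g (l + 1) = s (l + 1) ≫ dY (l + 1) + dX l ≫ s l

/-- Two complexes are homotopy equivalent (i.e., isomorphic in the homotopy category). -/
def HomotopyEquivDown (X Y : ℤ → C) (dX : ∀ l : ℤ, X (l + 1) ⟶ X l)
    (dY : ∀ l : ℤ, Y (l + 1) ⟶ Y l) : Prop :=
  ∃ (f : ∀ l : ℤ, X l ⟶ Y l) (g : ∀ l : ℤ, Y l ⟶ X l),
    IsChainMapDown X Y dX dY f ∧ IsChainMapDown Y X dY dX g ∧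
    ChainHomotopicDown X X dX dX (fun l => f l ≫ g l) (fun l => 𝟙 (X l)) ∧
    ChainHomotopicDown Y Y dY dY (fun l => g l ≫ f l) (fun l => 𝟙 (Y l))

end Complexes


namespace WeightStructure

lemma LE_of_iso (w : WeightStructure C) {X Y : C} (e : X ≅ Y) (h : X ∈ w.LE) : Y ∈ w.LE :=
  w.retract_LE ⟨e.inv, e.hom, e.inv_hom_id⟩ h

lemma GE_of_iso (w : WeightStructure C) {X Y : C} (e : X ≅ Y) (h : X ∈ w.GE) : Y ∈ w.GE :=
  w.retract_GE ⟨e.inv, e.hom, e.inv_hom_id⟩ h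

lemma LE_of_orthogonal (w : WeightStructure C) (X : C)
    (hX : ∀ Y ∈ w.GE, ∀ f : X ⟶ Y⟦(1 : ℤ)⟧, f = 0) : X ∈ w.LE := by
  obtain ⟨A, B, f, g, h, hT, hA, hB⟩ := w.decomp X
  let e : B ≅ B⟦(-1 : ℤ)⟧⟦(1 : ℤ)⟧ := (shiftNegShift B (1 : ℤ)).symm
  have hg : g = 0 := by
    rw [← cancel_mono e.hom, zero_comp]
    exact hX _ hB _
  obtain ⟨s, hs⟩ := Triangle.coyoneda_exact₂ _ hT (𝟙 X)
    (show 𝟙 X ≫ g = 0 by rw [hg, comp_zero])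
  exact w.retract_LE ⟨s, f, hs.symm⟩ hA

lemma GE_of_orthogonal (w : WeightStructure C) (Y : C)
    (hY : ∀ X ∈ w.LE, ∀ f : X ⟶ Y⟦(1 : ℤ)⟧, f = 0) : Y ∈ w.GE := by
  obtain ⟨A, B, f, g, h, hT, hA, hB⟩ := w.decomp (Y⟦(1 : ℤ)⟧)
  have hf : f = 0 := hY _ hA f
  obtain ⟨r, hr⟩ : ∃ r : B ⟶ Y⟦(1 : ℤ)⟧, 𝟙 _ = g ≫ r :=
    Triangle.yoneda_exact₂ _ hT (𝟙 (Y⟦(1 : ℤ)⟧))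
      (show f ≫ 𝟙 (Y⟦(1 : ℤ)⟧) = 0 by rw [hf, zero_comp])
  refine w.GE_of_iso (shiftShiftNeg Y (1 : ℤ)) (w.retract_GE ⟨g⟦(-1 : ℤ)⟧', r⟦(-1 : ℤ)⟧', ?_⟩ hB)
  rw [← Functor.map_comp, ← hr, CategoryTheory.Functor.map_id]

lemma LE_of_distTriang (w : WeightStructure C) (T : Triangle C) (hT : T ∈ distTriang C)
    (h₁ : T.obj₁ ∈ w.LE) (h₃ : T.obj₃ ∈ w.LE) : T.obj₂ ∈ w.LE := by
  refine w.LE_of_orthogonal _ fun Y hY f => ?_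
  obtain ⟨g, rfl⟩ := Triangle.yoneda_exact₂ _ hT f (w.orthogonal h₁ hY _)
  rw [w.orthogonal h₃ hY g, comp_zero]

lemma GE_of_distTriang (w : WeightStructure C) (T : Triangle C) (hT : T ∈ distTriang C)
    (h₁ : T.obj₁ ∈ w.GE) (h₃ : T.obj₃ ∈ w.GE) : T.obj₂ ∈ w.GE := by
  refine w.GE_of_orthogonal _ fun X hX f => ?_
  obtain ⟨g, hg⟩ := Triangle.coyoneda_exact₂ _ (Triangle.shift_distinguished T hT 1) f
    (w.orthogonal hX h₃ _)
  rw [hg, w.orthogonal hX h₁ g]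
  exact zero_comp

lemma GE_shift_nat (w : WeightStructure C) {X : C} (hX : X ∈ w.GE) (n : ℕ) :
    X⟦(n : ℤ)⟧ ∈ w.GE := by
  induction n with
  | zero => exact w.GE_of_iso ((shiftFunctorZero' C ((0 : ℕ) : ℤ) (by simp)).symm.app X) hX
  | succ n ih =>
    exact w.GE_of_iso ((shiftFunctorAdd' C (n : ℤ) 1 ((n + 1 : ℕ) : ℤ) (by simp)).symm.app X)
      (w.shift_GE ih)

lemma LE_shift_nat (w : WeightStructure C) {X : C} (hX : X ∈ w.LE) (n : ℕ) :
    X⟦(-n : ℤ)⟧ ∈ w.LE := by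
  induction n with
  | zero => exact w.LE_of_iso ((shiftFunctorZero' C (-((0 : ℕ) : ℤ)) (by simp)).symm.app X) hX
  | succ n ih =>
    exact w.LE_of_iso
      ((shiftFunctorAdd' C (-n : ℤ) (-1) (-((n + 1 : ℕ) : ℤ)) (by push_cast; ring)).symm.app X)
      (w.shift_LE ih)

lemma GE_shift_mono (w : WeightStructure C) {X : C} {a b : ℤ} (hab : a ≤ b)
    (hX : X⟦a⟧ ∈ w.GE) : X⟦b⟧ ∈ w.GE :=
  w.GE_of_iso ((shiftFunctorAdd' C a ((b - a).toNat : ℤ) b (by omega)).symm.app X)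
    (w.GE_shift_nat hX _)

lemma LE_shift_anti (w : WeightStructure C) {X : C} {a b : ℤ} (hab : b ≤ a)
    (hX : X⟦a⟧ ∈ w.LE) : X⟦b⟧ ∈ w.LE :=
  w.LE_of_iso ((shiftFunctorAdd' C a (-((a - b).toNat : ℤ)) b (by omega)).symm.app X)
    (w.LE_shift_nat hX _)

/-- The weight decomposition in degree `-1`, obtained by shifting the one of `M[1]`. -/
lemma decomp_neg_one (w : WeightStructure C) (M : C) :
    ∃ (A B : C) (f : A ⟶ M) (g : M ⟶ B) (h : B ⟶ A⟦(1 : ℤ)⟧),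
      Triangle.mk f g h ∈ (distTriang C) ∧ A⟦(1 : ℤ)⟧ ∈ w.LE ∧ B ∈ w.GE := by
  obtain ⟨X, Y, f, g, h, hT, hX, hY⟩ := w.decomp (M⟦(1 : ℤ)⟧)
  have hT' := Triangle.shift_distinguished _ hT (-1)
  set T := (Triangle.shiftFunctor C (-1)).obj (Triangle.mk f g h)
  let e : T.obj₂ ≅ M := shiftShiftNeg M (1 : ℤ)
  refine ⟨T.obj₁, T.obj₃, T.mor₁ ≫ e.hom, e.inv ≫ T.mor₂, T.mor₃, ?_,
    w.LE_of_iso (shiftNegShift X (1 : ℤ)).symm hX, hY⟩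
  exact isomorphic_distinguished T hT' _
    (Triangle.isoMk _ _ (Iso.refl T.obj₁) e.symm (Iso.refl T.obj₃)
      (show (T.mor₁ ≫ e.hom) ≫ e.inv = 𝟙 T.obj₁ ≫ T.mor₁ by simp)
      (show (e.inv ≫ T.mor₂) ≫ 𝟙 T.obj₃ = e.inv ≫ T.mor₂ by simp)
      (show T.mor₃ ≫ (𝟙 T.obj₁)⟦(1 : ℤ)⟧' = 𝟙 T.obj₃ ≫ T.mor₃ by simp))

variable {C' : Type*} [Category C'] [HasZeroObject C'] [HasShift C' ℤ]
    [Preadditive C'] [∀ n : ℤ, (shiftFunctor C' n).Additive] [Pretriangulated C']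

/-- Induction on the length `n` of the weight range `[-n, 0]` of `X`, splitting off the top
weight `0` part `B` of `X`. -/
lemma map_LE_of_heart (w : WeightStructure C) (w' : WeightStructure C')
    (F : C ⥤ C') [F.CommShift ℤ] [F.IsTriangulated]
    (hF : ∀ X ∈ w.LE ∩ w.GE, F.obj X ∈ w'.LE ∩ w'.GE) (n : ℕ) :
    ∀ X ∈ w.LE, X⟦(n : ℤ)⟧ ∈ w.GE → F.obj X ∈ w'.LE := by
  induction n with
  | zero =>
    intro X hX hX'
    exact (hF X ⟨hX, w.GE_of_iso ((shiftFunctorZero' C ((0 : ℕ) : ℤ) (by simp)).app X) hX'⟩).1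
  | succ n ih =>
    intro X hX hX'
    obtain ⟨A, B, f, g, h, hT, hA, hB⟩ := w.decomp_neg_one X
    have hB' : B ∈ w.LE := w.LE_of_distTriang _ (rot_of_distTriang _ hT) hX hA
    have hAn : A⟦(1 : ℤ)⟧⟦(n : ℤ)⟧ ∈ w.GE := by
      refine w.GE_of_iso
        ((shiftFunctorAdd' C 1 (n : ℤ) ((n + 1 : ℕ) : ℤ) (by push_cast; ring)).app A) ?_
      refine w.GE_of_distTriang _ (Triangle.shift_distinguished _
        (inv_rot_of_distTriang _ hT) ((n + 1 : ℕ) : ℤ)) ?_ hX'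
      exact w.GE_of_iso
        ((shiftFunctorAdd' C (-1) ((n + 1 : ℕ) : ℤ) (n : ℤ) (by push_cast; ring)).app B)
        (w.GE_shift_nat hB n)
    have hFA : F.obj A ∈ w'.LE :=
      w'.LE_of_iso ((shiftFunctor C' (-1 : ℤ)).mapIso ((F.commShiftIso (1 : ℤ)).app A) ≪≫
        shiftShiftNeg (F.obj A) (1 : ℤ)) (w'.shift_LE (ih _ hA hAn))
    exact w'.LE_of_distTriang _ (F.map_distinguished _ hT) hFA (hF B ⟨hB', hB⟩).1

/-- Induction on the length `n` of the weight range `[0, n]` of `X`, splitting off the bottom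
weight `0` part `A` of `X`. -/
lemma map_GE_of_heart (w : WeightStructure C) (w' : WeightStructure C')
    (F : C ⥤ C') [F.CommShift ℤ] [F.IsTriangulated]
    (hF : ∀ X ∈ w.LE ∩ w.GE, F.obj X ∈ w'.LE ∩ w'.GE) (n : ℕ) :
    ∀ X ∈ w.GE, X⟦(-n : ℤ)⟧ ∈ w.LE → F.obj X ∈ w'.GE := by
  induction n with
  | zero =>
    intro X hX hX'
    exact (hF X ⟨w.LE_of_iso ((shiftFunctorZero' C (-((0 : ℕ) : ℤ)) (by simp)).app X) hX',
      hX⟩).2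
  | succ n ih =>
    intro X hX hX'
    obtain ⟨A, B, f, g, h, hT, hA, hB⟩ := w.decomp X
    have hA' : A ∈ w.GE := w.GE_of_distTriang _ (inv_rot_of_distTriang _ hT) hB hX
    have hBn : B⟦(-1 : ℤ)⟧⟦(-n : ℤ)⟧ ∈ w.LE := by
      refine w.LE_of_iso ((shiftFunctorAdd' C (-1) (-n : ℤ) (-((n + 1 : ℕ) : ℤ))
        (by push_cast; ring)).app B) ?_
      refine w.LE_of_distTriang _ (Triangle.shift_distinguished _
        (rot_of_distTriang _ hT) (-((n + 1 : ℕ) : ℤ))) hX' ?_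
      exact w.LE_of_iso
        ((shiftFunctorAdd' C 1 (-((n + 1 : ℕ) : ℤ)) (-n : ℤ) (by push_cast; ring)).app A)
        (w.LE_shift_nat hA n)
    have hFB : F.obj B ∈ w'.GE :=
      w'.GE_of_iso ((shiftFunctor C' (1 : ℤ)).mapIso ((F.commShiftIso (-1 : ℤ)).app B) ≪≫
        shiftNegShift (F.obj B) (1 : ℤ)) (w'.shift_GE (ih _ hB hBn))
    exact w'.GE_of_distTriang _ (F.map_distinguished _ hT) (hF A ⟨hA, hA'⟩).2 hFB

end WeightStructure

/-- an exact functor between (pre)triangulated categories endowed with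
weight structures (`w` bounded) is weight-exact if and only if it maps `C_{w=0}`
into `C'_{w'=0}`. -/
theorem statement4 {C' : Type*} [Category C'] [HasZeroObject C'] [HasShift C' ℤ]
    [Preadditive C'] [∀ n : ℤ, (shiftFunctor C' n).Additive] [Pretriangulated C']
    (w : WeightStructure C) (hw : w.IsBounded) (w' : WeightStructure C')
    (F : C ⥤ C') [F.CommShift ℤ] [F.IsTriangulated] :
    ((∀ X ∈ w.LE, F.obj X ∈ w'.LE) ∧ (∀ X ∈ w.GE, F.obj X ∈ w'.GE)) ↔
      (∀ X ∈ w.LE ∩ w.GE, F.obj X ∈ w'.LE ∩ w'.GE) := by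
  refine ⟨fun h X hX => ⟨h.1 X hX.1, h.2 X hX.2⟩, fun hF => ⟨fun X hX => ?_, fun X hX => ?_⟩⟩
  · obtain ⟨i, hi⟩ := (hw X).2
    exact w.map_LE_of_heart w' F hF (-i).toNat X hX
      (w.GE_shift_mono (Int.self_le_toNat (-i)) hi)
  · obtain ⟨i, hi⟩ := (hw X).1
    exact w.map_GE_of_heart w' F hF i.toNat X hX
      (w.LE_shift_anti (neg_le_neg (Int.self_le_toNat i)) hi)

end CWH
end

section
/- Let w be a weight structure on a triangulated category C and let D be a full triangulated subcategory of C such that w restricts to D, i.e., the pair (Obj D ∩ C_{w≤0}, Obj D ∩ C_{w≥0}) is a weight structure on D. Let n ≥ 0 be an integer, let M ∈ C_{w≤0} and N ∈ C_{w≥−n}, and let f : M → N be a morphism that factors through an object P of D (i.e., f = u₂ ∘ u₁ with u₁ : M → P, u₂ : P → N, P ∈ Obj D). Then f factors through some object of D_{[−n,0]}, i.e., through an object of D lying in C_{w≥−n} ∩ C_{w≤0}. -/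
/-! Weight truncation is applied twice inside the subcategory. In a decomposition
`X → Q → Y` with `X` of weights `≤ 0` and `Y` of weights `≥ 1`, orthogonality kills `M → Y`,
so `u₁` lifts to `X`. In a decomposition `A → X → B` with `A` of weights `≤ -n-1` and `B` of
weights `≥ -n`, orthogonality kills `A → N`, so `X → N` extends to `B`. It remains to see that
`B` has weights `≤ 0`. As `B` is an extension of `A⟦1⟧` by `X`, it is left orthogonal to
`C_{w≥1}`, and this characterizes `C_{w≤0}` (`WeightStructure.mem_LE_of_orthogonal`): the
projection of such a `B` to the second term of its weight decomposition vanishes, so `B` is a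
retract of the first one. The octahedral axiom is not needed. -/

open CategoryTheory CategoryTheory.Limits CategoryTheory.Pretriangulated

namespace CWH

variable (C : Type*) [Category C] [HasZeroObject C] [HasShift C ℤ]
  [Preadditive C] [∀ n : ℤ, (shiftFunctor C n).Additive] [Pretriangulated C]

variable {C}

lemma IsRetract.of_iso {D : Type*} [Category D] {X Y : D} (e : X ≅ Y) : IsRetract X Y :=
  ⟨e.hom, e.inv, e.hom_inv_id⟩

namespace WeightStructure

variable (w : WeightStructure C)

/-- Orthogonality with the target given as an object of `C_{w≥1}` rather than as a shift. -/
lemma hom_eq_zero {X Y : C} (hX : X ∈ w.LE) (hY : Y⟦(-1 : ℤ)⟧ ∈ w.GE) (f : X ⟶ Y) :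
    f = 0 := by
  let e : (Y⟦(-1 : ℤ)⟧)⟦(1 : ℤ)⟧ ≅ Y := (shiftFunctorCompIsoId C (-1 : ℤ) 1 (by omega)).app Y
  have h := w.orthogonal hX hY (f ≫ e.inv)
  rw [← cancel_mono e.inv, h, zero_comp]

lemma hom_eq_zero_of_shift (k : ℤ) {X Y : C} (hX : X⟦k⟧ ∈ w.LE)
    (hY : Y⟦k - 1⟧ ∈ w.GE) (f : X ⟶ Y) : f = 0 := by
  apply (shiftFunctor C k).map_injective
  rw [Functor.map_zero]
  refine w.hom_eq_zero hX ?_ _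
  exact w.retract_GE
    (IsRetract.of_iso ((shiftFunctorAdd' C k (-1) (k - 1) (by omega)).app Y).symm) hY

/-- `C_{w≤0}` contains every object that is left orthogonal to `C_{w≥1}`. -/
lemma mem_LE_of_orthogonal {B : C}
    (h : ∀ (Y : C), Y⟦(-1 : ℤ)⟧ ∈ w.GE → ∀ f : B ⟶ Y, f = 0) : B ∈ w.LE := by
  obtain ⟨X, Y, i, p, d, hT, hX, hY⟩ := w.decomp B
  obtain ⟨s, hs⟩ := Triangle.coyoneda_exact₂ _ hT (𝟙 B) (by
    change 𝟙 B ≫ p = 0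
    rw [h Y hY p, comp_zero])
  exact w.retract_LE ⟨s, i, hs.symm⟩ hX

lemma mem_LE_of_triangle {X B A : C} {f : X ⟶ B} {g : B ⟶ A} {h : A ⟶ X⟦(1 : ℤ)⟧}
    (hT : Triangle.mk f g h ∈ distTriang C) (hX : X ∈ w.LE) (hA : A ∈ w.LE) : B ∈ w.LE := by
  apply w.mem_LE_of_orthogonal
  intro Y hY φ
  obtain ⟨ψ, hψ⟩ : ∃ ψ : A ⟶ Y, φ = g ≫ ψ := Triangle.yoneda_exact₂ _ hT φ (w.hom_eq_zero hX hY _)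
  rw [hψ, w.hom_eq_zero hA hY ψ, comp_zero]

lemma shift_neg_mem_LE {X : C} (hX : X ∈ w.LE) (n : ℕ) : X⟦(-(n : ℤ))⟧ ∈ w.LE := by
  induction n with
  | zero =>
    exact w.retract_LE (IsRetract.of_iso ((shiftFunctorZero' C (-((0 : ℕ) : ℤ)) (by simp)).app X))
      hX
  | succ n ih =>
    exact w.retract_LE (IsRetract.of_iso ((shiftFunctorAdd' C (-(n : ℤ)) (-1)
      (-((n + 1 : ℕ) : ℤ)) (by push_cast; omega)).app X)) (w.shift_LE ih)

end WeightStructure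

/-- if `w` restricts to a full triangulated subcategory `D` (with class of
objects `P`), `M ∈ C_{w≤0}`, `N ∈ C_{w≥-n}` and `f : M ⟶ N` factors through an object
of `D`, then `f` factors through an object of `D_{[-n,0]}`. -/
theorem statement8 (w : WeightStructure C) (P : Set C) (hP : IsTriangulatedSub P)
    (hres : IsWeightStructureOn P (P ∩ w.LE) (P ∩ w.GE))
    (n : ℕ) (M N : C) (hM : M ∈ w.LE) (hN : N ∈ w.ge (-(n : ℤ)))
    (f : M ⟶ N) (Q : C) (hQ : Q ∈ P) (u₁ : M ⟶ Q) (u₂ : Q ⟶ N) (hf : u₁ ≫ u₂ = f) :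
    ∃ (Q' : C) (v₁ : M ⟶ Q') (v₂ : Q' ⟶ N),
      Q' ∈ P ∧ Q' ∈ w.ge (-(n : ℤ)) ∧ Q' ∈ w.LE ∧ v₁ ≫ v₂ = f := by
  obtain ⟨X, Y, i, p, d, hT, hX, hY⟩ := hres.decomp Q hQ
  obtain ⟨a, ha⟩ : ∃ a : M ⟶ X, u₁ = a ≫ i :=
    Triangle.coyoneda_exact₂ _ hT u₁ (w.hom_eq_zero hM hY.2 _)
  -- The decomposition of `X` at level `-n-1` is that of `X⟦n+1⟧` at level `0`, shifted back.
  obtain ⟨A, B, j, q, e, hT', hA, hB⟩ := hres.decomp (X⟦(n + 1 : ℤ)⟧) (hP.shift X hX.1 _)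
  have hBP : B ∈ P := hP.ext₃ _ _ _ hT' hA.1 (hP.shift X hX.1 _)
  let eX : (X⟦(n + 1 : ℤ)⟧)⟦(-(n + 1 : ℤ))⟧ ≅ X :=
    (shiftFunctorCompIsoId C (n + 1 : ℤ) (-(n + 1 : ℤ)) (by omega)).app X
  have hXLE : (X⟦(n + 1 : ℤ)⟧)⟦(-(n + 1 : ℤ))⟧ ∈ w.LE :=
    w.retract_LE (IsRetract.of_iso eX) hX.2
  obtain ⟨j', q', e', hS⟩ : ∃ (j' : A⟦(-(n + 1 : ℤ))⟧ ⟶ (X⟦(n + 1 : ℤ)⟧)⟦(-(n + 1 : ℤ))⟧)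
      (q' : (X⟦(n + 1 : ℤ)⟧)⟦(-(n + 1 : ℤ))⟧ ⟶ B⟦(-(n + 1 : ℤ))⟧)
      (e' : B⟦(-(n + 1 : ℤ))⟧ ⟶ (A⟦(-(n + 1 : ℤ))⟧)⟦(1 : ℤ)⟧),
      Triangle.mk j' q' e' ∈ distTriang C :=
    ⟨_, _, _, Triangle.shift_distinguished _ hT' (-(n + 1 : ℤ))⟩
  obtain ⟨b, hb⟩ : ∃ b : B⟦(-(n + 1 : ℤ))⟧ ⟶ N, eX.hom ≫ i ≫ u₂ = q' ≫ b :=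
    Triangle.yoneda_exact₂ _ hS (eX.hom ≫ i ≫ u₂) (by
    refine w.hom_eq_zero_of_shift (n + 1 : ℤ) ?_ ?_ _
    · exact w.retract_LE (IsRetract.of_iso
        ((shiftFunctorCompIsoId C (-(n + 1 : ℤ)) (n + 1 : ℤ) (by omega)).app A)) hA.2
    · have h : (n + 1 : ℤ) - 1 = -(-(n : ℤ)) := by omega
      rw [h]
      exact hN)
  have hA1 : (A⟦(-(n + 1 : ℤ))⟧)⟦(1 : ℤ)⟧ ∈ w.LE :=
    w.retract_LE (IsRetract.of_iso ((shiftFunctorAdd' C (-(n + 1 : ℤ)) 1 (-(n : ℤ))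
      (by omega)).app A).symm) (w.shift_neg_mem_LE hA.2 n)
  refine ⟨B⟦(-(n + 1 : ℤ))⟧, a ≫ eX.inv ≫ q', b, hP.shift _ hBP _, ?_, w.mem_LE_of_triangle (rot_of_distTriang _ hS) hXLE hA1, ?_⟩
  · exact w.retract_GE (IsRetract.of_iso ((shiftFunctorAdd' C (-(n + 1 : ℤ)) (-(-(n : ℤ))) (-1)
      (by omega)).app B).symm) hB.2
  · rw [Category.assoc, Category.assoc, ← hb, Iso.inv_hom_id_assoc, ← Category.assoc, ← ha, hf]


end CWH
end
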